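/- arXiv:2302.09355 — 4 statements merged into one kernel-verified Lean document; each statement's English description precedes it below -/
import Mathlib

section
/- Let M ∈ ℝ^{N×N} be symmetric positive definite, let B ∈ ℝ^{N×N} satisfy xᵀ B x > 0 for every nonzero x ∈ ℝ^N, let Δt > 0, and let Ψ ∈ ℝ^{N×R} have linearly independent columns. Then the LSPG reduced-order dynamics matrix G_LSPG := Ψᵀ (B + Bᵀ) Ψ + Δt · Ψᵀ Bᵀ M⁻¹ B Ψ is symmetric positive definite. In particular, a discrete LSPG ROM built with weighting matrix W = M⁻¹ on a full-order model whose dynamics matrix B is positive definite is stable in the sense that its dynamics matrix is positive definite. -/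
open Matrix

/-! Writing the second summand as `Δt (BΨ)ᵀ M⁻¹ (BΨ)` shows that it is a congruence of a positive
definite matrix by the injective `B Ψ`, so the strict positivity comes from this summand. The first
is the congruence by `Ψ` of `B + Bᵀ`, whose quadratic form `2 xᵀBx` is nonnegative. -/

section

variable {n : Type*} [Fintype n]

lemma posSemidef_add_transpose_of_dotProduct_mulVec_nonneg {R : Type*} [CommRing R]
    [PartialOrder R] [AddLeftMono R] [StarRing R] [TrivialStar R] {A : Matrix n n R}
    (hA : ∀ x, 0 ≤ x ⬝ᵥ (A *ᵥ x)) : (A + Aᵀ).PosSemidef := by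
  refine .of_dotProduct_mulVec_nonneg ?_ fun x => ?_
  · simpa only [conjTranspose_eq_transpose_of_trivial] using isHermitian_add_transpose_self A
  · calc
      0 ≤ x ⬝ᵥ (A *ᵥ x) + x ⬝ᵥ (A *ᵥ x) := add_nonneg (hA x) (hA x)
      _ = star x ⬝ᵥ ((A + Aᵀ) *ᵥ x) := by
        rw [star_trivial, add_mulVec, dotProduct_add, dotProduct_transpose_mulVec]

lemma mulVec_injective_of_dotProduct_mulVec_ne_zero {R : Type*} [NonUnitalNonAssocRing R]
    {A : Matrix n n R} (hA : ∀ x, x ≠ 0 → x ⬝ᵥ (A *ᵥ x) ≠ 0) : Function.Injective A.mulVec := by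
  intro x y hxy
  by_contra hne
  refine hA (x - y) (sub_ne_zero.mpr hne) ?_
  rw [mulVec_sub, sub_eq_zero.mpr hxy, dotProduct_zero]

theorem lspg_dynamics_matrix_posDef_general {m K : Type*} [Fintype m] [DecidableEq n] [Field K]
    [PartialOrder K] [StarRing K] [StarOrderedRing K] {M B : Matrix n n K} {Ψ : Matrix n m K}
    {Δt : K} (hM : M.PosDef) (hB : (B + Bᴴ).PosSemidef) (hΔt : 0 < Δt)
    (hBΨ : Function.Injective (B * Ψ).mulVec) :
    (Ψᴴ * (B + Bᴴ) * Ψ + Δt • (Ψᴴ * Bᴴ * M⁻¹ * B * Ψ)).PosDef := by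
  have hsymm : (Ψᴴ * (B + Bᴴ) * Ψ).PosSemidef := hB.conjTranspose_mul_mul_same Ψ
  have hresidual : (Ψᴴ * Bᴴ * M⁻¹ * B * Ψ).PosDef := by
    simpa only [conjTranspose_mul, Matrix.mul_assoc] using hM.inv.conjTranspose_mul_mul_same hBΨ
  exact .posSemidef_add hsymm (hresidual.smul hΔt)

end

/-- Stability of the LSPG ROM with weighting `W = M⁻¹` on a full-order model with positive
definite dynamics matrix `B`: the LSPG reduced dynamics matrix
`G_LSPG = Ψᵀ(B + Bᵀ)Ψ + Δt ΨᵀBᵀM⁻¹BΨ` is symmetric positive definite. -/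
theorem lspg_dynamics_matrix_posDef
    (N R : ℕ) (M : Matrix (Fin N) (Fin N) ℝ) (hM : M.PosDef)
    (B : Matrix (Fin N) (Fin N) ℝ) (hB : ∀ x : Fin N → ℝ, x ≠ 0 → 0 < x ⬝ᵥ (B *ᵥ x))
    (Δt : ℝ) (hΔt : 0 < Δt)
    (Ψ : Matrix (Fin N) (Fin R) ℝ) (hΨ : LinearIndependent ℝ (fun j : Fin R => Ψᵀ j)) :
    (Ψᵀ * (B + Bᵀ) * Ψ + Δt • (Ψᵀ * Bᵀ * M⁻¹ * B * Ψ)).PosDef := by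
  have hBsymm : (B + Bᵀ).PosSemidef :=
    posSemidef_add_transpose_of_dotProduct_mulVec_nonneg fun x => by
      obtain rfl | hx := eq_or_ne x 0
      · rw [zero_dotProduct]
      · exact (hB x hx).le
  have hBΨ : Function.Injective (B * Ψ).mulVec := by
    have hBinj := mulVec_injective_of_dotProduct_mulVec_ne_zero fun x hx => (hB x hx).ne'
    simpa only [Function.comp_def, mulVec_mulVec] using hBinj.comp (mulVec_injective_iff.mpr hΨ)
  simpa only [conjTranspose_eq_transpose_of_trivial] using
    lspg_dynamics_matrix_posDef_general hM hBsymm hΔt hBΨ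
end

section
/- Let V be a real inner product space, let v₁,…,v_N ∈ V, let P ∈ ℝ^{N×N} be the Gram matrix P_{ij} = ⟨v_i, v_j⟩, and let Ψ ∈ ℝ^{N×R} be P-orthonormal, i.e., Ψᵀ P Ψ = I_R. Define the reduced basis functions φ_j := Σ_{i=1}^N Ψ_{ij} v_i, j = 1,…,R, and let u := Σ_{i=1}^N a_i v_i for a ∈ ℝ^N. Then the φ_j are orthonormal in V, and the continuous projection error equals the discrete P-weighted projection error: ‖ u − Σ_{j=1}^R ⟨u, φ_j⟩ φ_j ‖² = (a − Ψ Ψᵀ P a)ᵀ P (a − Ψ Ψᵀ P a). Consequently, the continuous POD minimization problem and the discrete POD minimization problem with weighting matrix P have identical objective values, and the discrete POD basis recovers the continuous POD basis. -/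
/-!
The synthesis map `x ↦ ∑ i, x i • v i` turns the sesquilinear form of the Gram matrix on coefficient
vectors into the inner product. The coefficients `⟪φ j, u⟫` are the entries of `Ψᴴ *ᵥ P *ᵥ a`, so
the residual of `u` is the image of `a - Ψ *ᵥ Ψᴴ *ᵥ P *ᵥ a`.
-/

open Matrix RealInnerProductSpace

section ReducedFamily

open scoped InnerProductSpace

/-- The reduced basis functions of POD: the combinations of the vectors `v i` whose coefficients are
the columns of `Ψ`. They form an indexed family, which may be linearly dependent. -/
def reducedFamily {ι κ R M : Type*} [Fintype ι] [Semiring R] [AddCommMonoid M] [Module R M]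
    (v : ι → M) (Ψ : Matrix ι κ R) (j : κ) : M :=
  ∑ i, Ψ i j • v i

theorem sum_smul_reducedFamily {ι κ R M : Type*} [Fintype ι] [Fintype κ] [CommSemiring R]
    [AddCommMonoid M] [Module R M] (v : ι → M) (Ψ : Matrix ι κ R) (c : κ → R) :
    ∑ j, c j • reducedFamily v Ψ j = ∑ i, (Ψ *ᵥ c) i • v i := by
  simp only [reducedFamily, mulVec, dotProduct, Finset.smul_sum, Finset.sum_smul, smul_smul,
    mul_comm]
  exact Finset.sum_comm

variable {𝕜 E ι κ : Type*} [RCLike 𝕜] [SeminormedAddCommGroup E] [InnerProductSpace 𝕜 E]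
  [Fintype ι] (v : ι → E) (Ψ : Matrix ι κ 𝕜)

theorem inner_reducedFamily_sum_smul (a : ι → 𝕜) (j : κ) :
    ⟪reducedFamily v Ψ j, ∑ i, a i • v i⟫_𝕜 = (Ψᴴ *ᵥ gram 𝕜 v *ᵥ a) j :=
  (star_dotProduct_gram_mulVec v (Ψ.col j) a).symm

theorem gram_reducedFamily : gram 𝕜 (reducedFamily v Ψ) = Ψᴴ * gram 𝕜 v * Ψ := by
  ext j k
  rw [Matrix.mul_assoc]
  exact inner_reducedFamily_sum_smul v Ψ (Ψ.col k) j

theorem orthonormal_reducedFamily_iff [DecidableEq κ] :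
    Orthonormal 𝕜 (reducedFamily v Ψ) ↔ Ψᴴ * gram 𝕜 v * Ψ = 1 := by
  simp only [← gram_reducedFamily, orthonormal_iff_ite, ← Matrix.ext_iff, gram_apply,
    Matrix.one_apply]

theorem norm_sum_smul_sq_eq_dotProduct_gram_mulVec (x : ι → 𝕜) :
    ((‖∑ i, x i • v i‖ ^ 2 : ℝ) : 𝕜) = star x ⬝ᵥ gram 𝕜 v *ᵥ x := by
  rw [star_dotProduct_gram_mulVec, inner_self_eq_norm_sq_to_K, RCLike.ofReal_pow]

theorem sub_sum_inner_smul_reducedFamily [Fintype κ] (a : ι → 𝕜) :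
    ∑ i, a i • v i - ∑ j, ⟪reducedFamily v Ψ j, ∑ i, a i • v i⟫_𝕜 • reducedFamily v Ψ j
      = ∑ i, (a - Ψ *ᵥ Ψᴴ *ᵥ gram 𝕜 v *ᵥ a) i • v i := by
  simp only [inner_reducedFamily_sum_smul, sum_smul_reducedFamily, Pi.sub_apply, sub_smul,
    Finset.sum_sub_distrib]

theorem continuous_pod_error_eq_discrete_pod_error_general [Fintype κ] [DecidableEq κ]
    (P : Matrix ι ι 𝕜) (hP : P = gram 𝕜 v)
    (φ : κ → E) (hφ : ∀ j, φ j = ∑ i, Ψ i j • v i)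
    (a : ι → 𝕜) (u : E) (hu : u = ∑ i, a i • v i) :
    (Orthonormal 𝕜 φ ↔ Ψᴴ * P * Ψ = 1) ∧
    ((‖u - ∑ j, ⟪φ j, u⟫_𝕜 • φ j‖ ^ 2 : ℝ) : 𝕜)
      = star (a - Ψ *ᵥ Ψᴴ *ᵥ P *ᵥ a) ⬝ᵥ P *ᵥ (a - Ψ *ᵥ Ψᴴ *ᵥ P *ᵥ a) := by
  obtain rfl : φ = reducedFamily v Ψ := funext hφ
  subst hP hu
  refine ⟨orthonormal_reducedFamily_iff v Ψ, ?_⟩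
  rw [sub_sum_inner_smul_reducedFamily, norm_sum_smul_sq_eq_dotProduct_gram_mulVec]

end ReducedFamily

/-- If `Ψ` is `P`-orthonormal (`ΨᵀPΨ = I`) for the Gram matrix `P` of basis functions
`vᵢ`, then the reduced basis functions `φⱼ = Σᵢ Ψ_{ij} vᵢ` are orthonormal, and the
continuous projection error equals the discrete `P`-weighted projection error:
`‖u − Σⱼ ⟨u, φⱼ⟩ φⱼ‖² = (a − ΨΨᵀPa)ᵀ P (a − ΨΨᵀPa)` for `u = Σᵢ aᵢ vᵢ`. -/
theorem continuous_pod_error_eq_discrete_pod_error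
    (V : Type*) [NormedAddCommGroup V] [InnerProductSpace ℝ V]
    (N R : ℕ) (v : Fin N → V)
    (P : Matrix (Fin N) (Fin N) ℝ) (hP : P = Matrix.of fun i j => ⟪v i, v j⟫)
    (Ψ : Matrix (Fin N) (Fin R) ℝ) (hΨ : Ψᵀ * P * Ψ = 1)
    (φ : Fin R → V) (hφ : ∀ j, φ j = ∑ i, Ψ i j • v i)
    (a : Fin N → ℝ) (u : V) (hu : u = ∑ i, a i • v i) :
    (∀ j k : Fin R, ⟪φ j, φ k⟫ = if j = k then (1 : ℝ) else 0) ∧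
    ‖u - ∑ j, ⟪u, φ j⟫ • φ j‖ ^ 2
      = (a - Ψ *ᵥ (Ψᵀ *ᵥ (P *ᵥ a))) ⬝ᵥ (P *ᵥ (a - Ψ *ᵥ (Ψᵀ *ᵥ (P *ᵥ a)))) := by
  obtain ⟨orthonormal_iff, error_eq⟩ :=
    continuous_pod_error_eq_discrete_pod_error_general v Ψ P hP φ hφ a u hu
  exact ⟨orthonormal_iff_ite.mp (orthonormal_iff.mpr hΨ), by simpa [real_inner_comm] using error_eq⟩
end

section
/- Let P ∈ ℝ^{N×N} be symmetric positive definite, let S ∈ ℝ^{N×N_s} have linearly independent columns (so K := Sᵀ P S is symmetric positive definite), let λ₁ ≥ λ₂ ≥ … ≥ λ_{N_s} > 0 be the eigenvalues of K with corresponding orthonormal eigenvectors e₁,…,e_{N_s}, let R ≤ N_s, let E_R = [e₁ … e_R], Λ_R = diag(λ₁,…,λ_R), and set Ψ := S E_R Λ_R^{-1/2}. Then Ψ solves the POD minimization problem: for every Φ ∈ ℝ^{N×R} with Φᵀ P Φ = I_R, Σ_{n=1}^{N_s} ‖ s_n − Ψ Ψᵀ P s_n ‖_P² ≤ Σ_{n=1}^{N_s}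 ‖ s_n − Φ Φᵀ P s_n ‖_P², where s_n denotes the n-th column of S and ‖x‖_P² = xᵀ P x; moreover the minimum value equals Σ_{i=R+1}^{N_s} λ_i. -/
open Matrix

/-! Multiplying the snapshots by the unitary matrix of eigenvectors changes no projection error and
turns them into pairwise orthogonal modes `vᵢ` with `‖vᵢ‖² = λᵢ`. By Pythagoras, an orthonormal
family `φ` of `R` vectors leaves the error `∑ᵢ λᵢ - ∑ᵢ λᵢ wᵢ`, where `wᵢ = ∑ₖ |⟪φₖ, vᵢ⟫|² / λᵢ`.
Bessel's inequality for `φ` gives `wᵢ ≤ 1`, and Bessel's inequality for the normalized modes gives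
`∑ᵢ wᵢ ≤ R`; under these constraints `∑ᵢ λᵢ wᵢ` is largest when the whole mass sits on the `R`
largest `λᵢ`. The normalized dominant modes attain this bound, as they reproduce their own modes and
are orthogonal to the remaining ones. -/

section DominantWeights

variable {ι R : Type*} [Fintype ι] [CommRing R] [LinearOrder R] [IsStrictOrderedRing R]

lemma sum_mul_le_sum_of_dominant {a w : ι → R} {J : Finset ι}
    (hdom : ∀ j ∈ J, ∀ i ∉ J, a i ≤ a j) (ha : ∀ j ∈ J, 0 ≤ a j)
    (hw₀ : ∀ i, 0 ≤ w i) (hw₁ : ∀ i, w i ≤ 1) (hw : ∑ i, w i ≤ J.card) :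
    ∑ i, a i * w i ≤ ∑ j ∈ J, a j := by
  classical
  obtain rfl | hJ := J.eq_empty_or_nonempty
  · have hw_zero : ∀ i, w i = 0 := fun i =>
      (Finset.sum_eq_zero_iff_of_nonneg fun i _ => hw₀ i).1
        (le_antisymm (by simpa using hw) (Finset.sum_nonneg fun i _ => hw₀ i)) i (Finset.mem_univ i)
    simp [hw_zero]
  · obtain ⟨m, hm, hmin⟩ := J.exists_min_image a hJ
    have hterm : ∀ i, (a i - a m) * w i ≤ if i ∈ J then a i - a m else 0 := by
      intro i
      split_ifs with hi
      · exact mul_le_of_le_one_right (sub_nonneg.2 (hmin i hi)) (hw₁ i)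
      · exact mul_nonpos_of_nonpos_of_nonneg (sub_nonpos.2 (hdom m hm i hi)) (hw₀ i)
    calc ∑ i, a i * w i = ∑ i, (a i - a m) * w i + a m * ∑ i, w i := by
          rw [Finset.mul_sum, ← Finset.sum_add_distrib]
          exact Finset.sum_congr rfl fun i _ => by ring
      _ ≤ ∑ i, (if i ∈ J then a i - a m else 0) + a m * J.card :=
          add_le_add (Finset.sum_le_sum fun i _ => hterm i)
            (mul_le_mul_of_nonneg_left hw (ha m hm))
      _ = ∑ j ∈ J, a j := by
          simp [Finset.sum_ite_mem, Finset.sum_sub_distrib, mul_comm]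

end DominantWeights

section SnapshotModes

variable {R M n ι κ : Type*} [Fintype ι]

/-- The combinations of the snapshots `s i` with coefficients in the columns of `V`, that is, the
columns of `S * V` if `S` has columns `s i`. They are the unnormalized POD modes if `V` diagonalizes
the Gram matrix of `s`. -/
def snapshotModes [Semiring R] [AddCommMonoid M] [Module R M] (s : ι → M) (V : Matrix ι κ R)
    (k : κ) : M :=
  ∑ i, V i k • s i

lemma snapshotModes_transpose [CommSemiring R] (S : Matrix n ι R) (V : Matrix ι κ R) (k : κ) :
    snapshotModes Sᵀ V k = S *ᵥ Vᵀ k := by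
  ext j
  simp [snapshotModes, mulVec, dotProduct, mul_comm]

end SnapshotModes

section ProjectionError

open scoped InnerProductSpace

variable {𝕜 E ι κ : Type*} [RCLike 𝕜] [SeminormedAddCommGroup E] [InnerProductSpace 𝕜 E]

variable (𝕜) in
/-- The POD functional: the total squared error of projecting the snapshots `s i` onto the span of
`φ`. The projection is written for an orthonormal `φ`. -/
def podError [Fintype ι] [Fintype κ] (s : ι → E) (φ : κ → E) : ℝ :=
  ∑ i, ‖s i - ∑ k, ⟪φ k, s i⟫_𝕜 • φ k‖ ^ 2

variable (𝕜) in
/-- The modes `v i` scaled to unit norm, from which the POD basis is selected. A mode of norm zero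
is sent to `0`. -/
noncomputable def normalizedModes (v : ι → E) (i : ι) : E := (‖v i‖ : 𝕜)⁻¹ • v i

lemma norm_sub_sum_inner_smul_sq [Fintype κ] {φ : κ → E} (hφ : Orthonormal 𝕜 φ) (x : E) :
    ‖x - ∑ k, ⟪φ k, x⟫_𝕜 • φ k‖ ^ 2 = ‖x‖ ^ 2 - ∑ k, ‖⟪φ k, x⟫_𝕜‖ ^ 2 := by
  set p := ∑ k, ⟪φ k, x⟫_𝕜 • φ k
  have horth : ⟪x - p, p⟫_𝕜 = 0 := by
    refine inner_sum _ _ _ |>.trans <| Finset.sum_eq_zero fun k _ => ?_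
    rw [inner_smul_right, inner_sub_left, hφ.inner_left_fintype, inner_conj_symm, sub_self,
      mul_zero]
  have hp : ‖p‖ ^ 2 = ∑ k, ‖⟪φ k, x⟫_𝕜‖ ^ 2 := by
    have hpp : ⟪p, p⟫_𝕜 = ∑ k, (‖⟪φ k, x⟫_𝕜‖ ^ 2 : 𝕜) := by
      simp only [p, hφ.inner_sum, RCLike.conj_mul]
    rw [@norm_sq_eq_re_inner 𝕜, hpp]
    exact_mod_cast RCLike.ofReal_re (K := 𝕜) _
  have hpyth := norm_add_sq_eq_norm_sq_add_norm_sq_of_inner_eq_zero (𝕜 := 𝕜) _ _ horth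
  rw [sub_add_cancel] at hpyth
  rw [← hp]
  linarith

lemma podError_eq_sub [Fintype ι] [Fintype κ] {φ : κ → E} (hφ : Orthonormal 𝕜 φ) (s : ι → E) :
    podError 𝕜 s φ = ∑ i, ‖s i‖ ^ 2 - ∑ i, ∑ k, ‖⟪φ k, s i⟫_𝕜‖ ^ 2 := by
  simp only [podError, norm_sub_sum_inner_smul_sq hφ, Finset.sum_sub_distrib]

lemma gram_snapshotModes [Fintype ι] (s : ι → E) (V : Matrix ι κ 𝕜) :
    gram 𝕜 (snapshotModes s V) = Vᴴ * gram 𝕜 s * V := by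
  ext k l
  rw [Matrix.mul_assoc]
  exact (star_dotProduct_gram_mulVec s (Vᵀ k) (Vᵀ l)).symm

-- `Matrix.gram_eq_one_iff_orthonormal` requires a definite inner product.
lemma orthonormal_iff_gram_eq_one [DecidableEq κ] {φ : κ → E} :
    Orthonormal 𝕜 φ ↔ gram 𝕜 φ = 1 := by
  simp only [orthonormal_iff_ite, ← Matrix.ext_iff, gram_apply, one_apply]

lemma trace_gram [Fintype ι] (s : ι → E) : trace (gram 𝕜 s) = ((∑ i, ‖s i‖ ^ 2 : ℝ) : 𝕜) := by
  simp [trace, inner_self_eq_norm_sq_to_K]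

lemma sum_norm_sq_snapshotModes [Fintype ι] [DecidableEq ι] (s : ι → E) {V : Matrix ι ι 𝕜}
    (hV : V ∈ unitaryGroup ι 𝕜) : ∑ i, ‖snapshotModes s V i‖ ^ 2 = ∑ i, ‖s i‖ ^ 2 := by
  apply RCLike.ofReal_injective (K := 𝕜)
  rw [← trace_gram, ← trace_gram, gram_snapshotModes, trace_mul_comm, ← Matrix.mul_assoc,
    ← star_eq_conjTranspose, mem_unitaryGroup_iff.1 hV, Matrix.one_mul]

lemma podError_snapshotModes [Fintype ι] [DecidableEq ι] [Fintype κ] (s : ι → E)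
    {V : Matrix ι ι 𝕜} (hV : V ∈ unitaryGroup ι 𝕜) (φ : κ → E) :
    podError 𝕜 (snapshotModes s V) φ = podError 𝕜 s φ := by
  have hresidual : ∀ i, snapshotModes s V i - ∑ k, ⟪φ k, snapshotModes s V i⟫_𝕜 • φ k =
      snapshotModes (fun j => s j - ∑ k, ⟪φ k, s j⟫_𝕜 • φ k) V i := by
    intro i
    simp only [snapshotModes, smul_sub, Finset.sum_sub_distrib, inner_sum, inner_smul_right,
      Finset.sum_smul, Finset.smul_sum, smul_smul]
    rw [Finset.sum_comm]
  simp only [podError, hresidual, sum_norm_sq_snapshotModes _ hV]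

lemma norm_sub_smul_normalizedModes (v : ι → E) (i : ι) :
    ‖v i - (‖v i‖ : 𝕜) • normalizedModes 𝕜 v i‖ = 0 := by
  obtain h | h := eq_or_ne (‖v i‖ : 𝕜) 0
  · simpa [normalizedModes, h] using RCLike.ofReal_eq_zero.1 h
  · rw [normalizedModes, smul_inv_smul₀ h, sub_self, norm_zero]

section OrthogonalFamily

variable {v : ι → E} (hv : Pairwise fun i j => ⟪v i, v j⟫_𝕜 = 0)

include hv

lemma inner_normalizedModes [DecidableEq ι] (i j : ι) :
    ⟪normalizedModes 𝕜 v i, v j⟫_𝕜 = if i = j then (‖v i‖ : 𝕜) else 0 := by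
  split_ifs with hij
  · subst hij
    obtain h | h := eq_or_ne (‖v i‖ : 𝕜) 0
    · simp [normalizedModes, h]
    · rw [normalizedModes, inner_smul_left, inner_self_eq_norm_sq_to_K, map_inv₀,
        RCLike.conj_ofReal, sq, inv_mul_cancel_left₀ h]
  · rw [normalizedModes, inner_smul_left, hv hij, mul_zero]

lemma orthonormal_normalizedModes {f : κ → ι} (hf : f.Injective) (hne : ∀ k, ‖v (f k)‖ ≠ 0) :
    Orthonormal 𝕜 (normalizedModes 𝕜 v ∘ f) := by
  classical
  rw [orthonormal_iff_ite]
  intro k l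
  change ⟪normalizedModes 𝕜 v (f k), (‖v (f l)‖ : 𝕜)⁻¹ • v (f l)⟫_𝕜 = _
  rw [inner_smul_right, inner_normalizedModes hv, hf.eq_iff]
  split_ifs with hkl
  · rw [hkl, inv_mul_cancel₀ (RCLike.ofReal_ne_zero.2 (hne l))]
  · rw [mul_zero]

lemma sum_norm_inner_sq_div_le [Fintype ι] (x : E) :
    ∑ i, ‖⟪v i, x⟫_𝕜‖ ^ 2 / ‖v i‖ ^ 2 ≤ ‖x‖ ^ 2 := by
  classical
  have hterm : ∀ i, ‖⟪v i, x⟫_𝕜‖ ^ 2 / ‖v i‖ ^ 2 = ‖⟪normalizedModes 𝕜 v i, x⟫_𝕜‖ ^ 2 := by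
    intro i
    simp [normalizedModes, inner_smul_left, mul_pow, div_eq_inv_mul]
  have hsupport : ∀ i, ‖⟪normalizedModes 𝕜 v i, x⟫_𝕜‖ ^ 2 ≠ 0 → ‖v i‖ ≠ 0 := by
    intro i hi h
    simp [normalizedModes, h] at hi
  calc ∑ i, ‖⟪v i, x⟫_𝕜‖ ^ 2 / ‖v i‖ ^ 2
      = ∑ i : {i // ‖v i‖ ≠ 0}, ‖⟪normalizedModes 𝕜 v i, x⟫_𝕜‖ ^ 2 := by
        simp only [hterm]
        rw [← Finset.sum_filter_of_ne fun i _ => hsupport i]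
        exact (Finset.sum_subtype _ (by simp) _)
    _ ≤ ‖x‖ ^ 2 := (orthonormal_normalizedModes hv Subtype.val_injective
        fun i : {i // ‖v i‖ ≠ 0} => i.2).sum_inner_products_le x

variable [Fintype ι] [DecidableEq ι] [Fintype κ] (f : κ ↪ ι)

lemma podError_normalizedModes :
    podError 𝕜 v (normalizedModes 𝕜 v ∘ f) = ∑ i ∈ (Finset.univ.map f)ᶜ, ‖v i‖ ^ 2 := by
  have hproj : ∀ i, ∑ k, ⟪normalizedModes 𝕜 v (f k), v i⟫_𝕜 • normalizedModes 𝕜 v (f k) =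
      if i ∈ Finset.univ.map f then (‖v i‖ : 𝕜) • normalizedModes 𝕜 v i else 0 := by
    intro i
    rw [← Finset.sum_map Finset.univ f fun j => ⟪normalizedModes 𝕜 v j, v i⟫_𝕜 •
      normalizedModes 𝕜 v j, ← Finset.sum_ite_eq' (Finset.univ.map f) i fun j =>
      (‖v j‖ : 𝕜) • normalizedModes 𝕜 v j]
    simp only [inner_normalizedModes hv, ite_smul, zero_smul]
  have hresidual : ∀ i, ‖v i - ∑ k, ⟪normalizedModes 𝕜 v (f k), v i⟫_𝕜 •
      normalizedModes 𝕜 v (f k)‖ ^ 2 = if i ∈ (Finset.univ.map f)ᶜ then ‖v i‖ ^ 2 else 0 := by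
    intro i
    rw [hproj]
    by_cases hi : i ∈ Finset.univ.map f
    · rw [if_pos hi, norm_sub_smul_normalizedModes, if_neg (by simpa using hi),
        zero_pow two_ne_zero]
    · rw [if_neg hi, sub_zero, if_pos (Finset.mem_compl.2 hi)]
  simp only [podError, Function.comp_apply, hresidual, Finset.sum_ite_mem, Finset.univ_inter]

lemma sum_compl_le_podError (hdom : ∀ k, ∀ i ∉ Set.range f, ‖v i‖ ≤ ‖v (f k)‖) {φ : κ → E}
    (hφ : Orthonormal 𝕜 φ) :
    ∑ i ∈ (Finset.univ.map f)ᶜ, ‖v i‖ ^ 2 ≤ podError 𝕜 v φ := by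
  have hbessel : ∀ i, ∑ k, ‖⟪φ k, v i⟫_𝕜‖ ^ 2 ≤ ‖v i‖ ^ 2 := fun i => hφ.sum_inner_products_le _
  set w : ι → ℝ := fun i => (∑ k, ‖⟪φ k, v i⟫_𝕜‖ ^ 2) / ‖v i‖ ^ 2 with hw_def
  have hw_mul : ∀ i, ‖v i‖ ^ 2 * w i = ∑ k, ‖⟪φ k, v i⟫_𝕜‖ ^ 2 := fun i =>
    mul_div_cancel_of_imp' fun h =>
      le_antisymm ((hbessel i).trans_eq h) (Finset.sum_nonneg fun k _ => sq_nonneg _)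
  have hw_sum : ∑ i, w i ≤ (Finset.univ.map f).card :=
    calc ∑ i, w i = ∑ k, ∑ i, ‖⟪v i, φ k⟫_𝕜‖ ^ 2 / ‖v i‖ ^ 2 := by
          simp only [hw_def, Finset.sum_div, norm_inner_symm (φ _)]
          exact Finset.sum_comm
      _ ≤ ∑ k, ‖φ k‖ ^ 2 := Finset.sum_le_sum fun k _ => sum_norm_inner_sq_div_le hv (φ k)
      _ = (Finset.univ.map f).card := by simp [hφ.norm_eq_one]
  have hcaptured : ∑ i, ‖v i‖ ^ 2 * w i ≤ ∑ i ∈ Finset.univ.map f, ‖v i‖ ^ 2 := by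
    refine sum_mul_le_sum_of_dominant ?_ (fun i _ => sq_nonneg _) (fun i => by positivity)
      (fun i => div_le_one_of_le₀ (hbessel i) (sq_nonneg _)) hw_sum
    simpa using fun k i hi => pow_le_pow_left₀ (norm_nonneg _) (hdom k i (by simpa using hi)) 2
  have hsplit := Finset.sum_add_sum_compl (Finset.univ.map f) fun i => ‖v i‖ ^ 2
  simp only [podError_eq_sub hφ, ← hw_mul]
  linarith

end OrthogonalFamily

theorem podError_optimality [Fintype ι] [DecidableEq ι] [Fintype κ] (s : ι → E)
    {V : Matrix ι ι 𝕜} (hV : V ∈ unitaryGroup ι 𝕜) {lam : ι → ℝ}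
    (hlam : Vᴴ * gram 𝕜 s * V = diagonal fun i => (lam i : 𝕜))
    (f : κ ↪ ι) (hpos : ∀ k, 0 < lam (f k))
    (hdom : ∀ k, ∀ i ∉ Set.range f, lam i ≤ lam (f k))
    {ψ : κ → E} (hψ : ∀ k, ψ k = (√(lam (f k)) : 𝕜)⁻¹ • snapshotModes s V (f k)) :
    Orthonormal 𝕜 ψ ∧
    (∀ φ : κ → E, Orthonormal 𝕜 φ → podError 𝕜 s ψ ≤ podError 𝕜 s φ) ∧
    podError 𝕜 s ψ = ∑ i ∈ (Finset.univ.map f)ᶜ, lam i := by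
  set v := snapshotModes s V with hv_def
  have hgram : ∀ i j, ⟪v i, v j⟫_𝕜 = diagonal (fun i => (lam i : 𝕜)) i j := fun i j => by
    rw [← hlam, ← gram_snapshotModes, gram_apply]
  have hv : Pairwise fun i j => ⟪v i, v j⟫_𝕜 = 0 := fun i j hij =>
    (hgram i j).trans (diagonal_apply_ne _ hij)
  have hnorm_sq : ∀ i, ‖v i‖ ^ 2 = lam i := fun i => by
    rw [@norm_sq_eq_re_inner 𝕜, hgram, diagonal_apply_eq, RCLike.ofReal_re]
  have hnorm : ∀ i, ‖v i‖ = √(lam i) := fun i => by rw [← hnorm_sq, Real.sqrt_sq (norm_nonneg _)]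
  obtain rfl : ψ = normalizedModes 𝕜 v ∘ f := funext fun k => by
    rw [hψ, Function.comp_apply, normalizedModes, hnorm]
  have hvalue : podError 𝕜 v (normalizedModes 𝕜 v ∘ f) = ∑ i ∈ (Finset.univ.map f)ᶜ, lam i := by
    simp only [podError_normalizedModes hv, hnorm_sq]
  have hlower : ∀ φ : κ → E, Orthonormal 𝕜 φ →
      ∑ i ∈ (Finset.univ.map f)ᶜ, lam i ≤ podError 𝕜 v φ := fun φ hφ => by
    simpa only [hnorm_sq] using sum_compl_le_podError hv f
      (fun k i hi => by simpa only [hnorm] using Real.sqrt_le_sqrt (hdom k i hi)) hφ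
  simp only [hv_def, podError_snapshotModes s hV] at hvalue hlower
  refine ⟨orthonormal_normalizedModes hv f.injective fun k => ?_,
    fun φ hφ => hvalue.trans_le (hlower φ hφ), hvalue⟩
  rw [hnorm]
  exact (Real.sqrt_pos.2 (hpos k)).ne'

end ProjectionError

section Eigenvectors

variable {R ι : Type*} [CommRing R] [StarRing R] [Fintype ι] [DecidableEq ι] {e : ι → ι → R}
  (horth : ∀ i j, star (e i) ⬝ᵥ e j = if i = j then 1 else 0)

include horth

lemma transpose_mem_unitaryGroup_of_orthonormal :
    (Matrix.of e)ᵀ ∈ unitaryGroup ι R := by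
  rw [mem_unitaryGroup_iff']
  ext i j
  rw [one_apply, ← horth]
  rfl

lemma conjTranspose_mul_mul_eq_diagonal_of_eigenvectors {K : Matrix ι ι R} {lam : ι → R}
    (heig : ∀ i, K *ᵥ e i = lam i • e i) :
    (Matrix.of e)ᵀᴴ * K * (Matrix.of e)ᵀ = diagonal lam := by
  ext i j
  calc ((Matrix.of e)ᵀᴴ * K * (Matrix.of e)ᵀ) i j = star (e i) ⬝ᵥ (K *ᵥ e j) := by
        rw [Matrix.mul_assoc]; rfl
    _ = diagonal lam i j := by
        rw [heig, dotProduct_smul, horth, diagonal_apply]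
        split_ifs with hij <;> simp [hij]

end Eigenvectors

section WeightedInnerProduct

open scoped ComplexOrder InnerProductSpace

variable {𝕜 n ι κ : Type*} [RCLike 𝕜]

variable [Fintype n]

/-- The POD functional in the matrix notation of the `P`-weighted inner product `xᴴ P y`, for
snapshots and basis vectors given as the columns of `S` and `Φ`. -/
def weightedPodError [Fintype ι] [Fintype κ] (P : Matrix n n 𝕜) (S : Matrix n ι 𝕜)
    (Φ : Matrix n κ 𝕜) : ℝ :=
  ∑ i, RCLike.re (star (Sᵀ i - Φ *ᵥ (Φᴴ *ᵥ (P *ᵥ Sᵀ i))) ⬝ᵥ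
    (P *ᵥ (Sᵀ i - Φ *ᵥ (Φᴴ *ᵥ (P *ᵥ Sᵀ i)))))

variable {P : Matrix n n 𝕜} (hP : P.PosSemidef)

lemma inner_toInnerProductSpace (x y : n → 𝕜) :
    letI := P.toSeminormedAddCommGroup hP
    letI := P.toInnerProductSpace hP
    ⟪x, y⟫_𝕜 = star x ⬝ᵥ (P *ᵥ y) :=
  dotProduct_comm _ _

lemma gram_transpose_toInnerProductSpace (A : Matrix n ι 𝕜) :
    letI := P.toSeminormedAddCommGroup hP
    letI := P.toInnerProductSpace hP
    gram 𝕜 Aᵀ = Aᴴ * P * A := by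
  let := P.toSeminormedAddCommGroup hP
  let := P.toInnerProductSpace hP
  ext i j
  rw [Matrix.mul_assoc]
  exact inner_toInnerProductSpace hP _ _

lemma orthonormal_transpose_toInnerProductSpace_iff [DecidableEq κ] {Φ : Matrix n κ 𝕜} :
    letI := P.toSeminormedAddCommGroup hP
    letI := P.toInnerProductSpace hP
    Orthonormal 𝕜 Φᵀ ↔ Φᴴ * P * Φ = 1 := by
  let := P.toSeminormedAddCommGroup hP
  let := P.toInnerProductSpace hP
  rw [← gram_transpose_toInnerProductSpace hP]
  exact orthonormal_iff_gram_eq_one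

lemma podError_toInnerProductSpace [Fintype ι] [Fintype κ] (S : Matrix n ι 𝕜) (Φ : Matrix n κ 𝕜) :
    letI := P.toSeminormedAddCommGroup hP
    letI := P.toInnerProductSpace hP
    podError 𝕜 Sᵀ Φᵀ = weightedPodError P S Φ := by
  let := P.toSeminormedAddCommGroup hP
  let := P.toInnerProductSpace hP
  have hproj : ∀ x : n → 𝕜, ∑ k, ⟪Φᵀ k, x⟫_𝕜 • Φᵀ k = Φ *ᵥ (Φᴴ *ᵥ (P *ᵥ x)) := by
    intro x
    ext j
    simp only [inner_toInnerProductSpace hP]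
    rw [Finset.sum_apply]
    exact Finset.sum_congr rfl fun k _ => mul_comm _ _
  refine Finset.sum_congr rfl fun i _ => ?_
  rw [hproj, @norm_sq_eq_re_inner 𝕜, inner_toInnerProductSpace hP]

theorem pod_basis_optimality_general [Fintype ι] [DecidableEq ι] [Fintype κ] [DecidableEq κ]
    {P : Matrix n n 𝕜} (hP : P.PosSemidef) (S : Matrix n ι 𝕜) (lam : ι → ℝ) (e : ι → ι → 𝕜)
    (horth : ∀ i j, star (e i) ⬝ᵥ e j = if i = j then 1 else 0)
    (heig : ∀ i, (Sᴴ * P * S) *ᵥ e i = (lam i : 𝕜) • e i)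
    (f : κ ↪ ι) (hpos : ∀ k, 0 < lam (f k))
    (hdom : ∀ k, ∀ i ∉ Set.range f, lam i ≤ lam (f k))
    {Ψ : Matrix n κ 𝕜} (hΨ : Ψ = S * Matrix.of (fun i k => e (f k) i) *
      diagonal fun k => (√(lam (f k)) : 𝕜)⁻¹) :
    Ψᴴ * P * Ψ = 1 ∧
    (∀ Φ : Matrix n κ 𝕜, Φᴴ * P * Φ = 1 → weightedPodError P S Ψ ≤ weightedPodError P S Φ) ∧
    weightedPodError P S Ψ = ∑ i ∈ (Finset.univ.map f)ᶜ, lam i := by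
  let := P.toSeminormedAddCommGroup hP
  let := P.toInnerProductSpace hP
  have hlam : (Matrix.of e)ᵀᴴ * gram 𝕜 Sᵀ * (Matrix.of e)ᵀ = diagonal fun i => (lam i : 𝕜) := by
    rw [gram_transpose_toInnerProductSpace hP]
    exact conjTranspose_mul_mul_eq_diagonal_of_eigenvectors horth heig
  have hcol : ∀ k, Ψᵀ k = (√(lam (f k)) : 𝕜)⁻¹ • snapshotModes Sᵀ (Matrix.of e)ᵀ (f k) := by
    intro k
    rw [snapshotModes_transpose, hΨ]
    ext j
    exact (mul_diagonal _ _ _ _).trans (mul_comm _ _)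
  simp only [← orthonormal_transpose_toInnerProductSpace_iff hP, ← podError_toInnerProductSpace hP]
  obtain ⟨horthΨ, hmin, hvalue⟩ := podError_optimality Sᵀ
    (transpose_mem_unitaryGroup_of_orthonormal horth) hlam f hpos hdom hcol
  exact ⟨horthΨ, fun Φ => hmin Φᵀ, hvalue⟩

end WeightedInnerProduct

lemma compl_map_castLEEmb {m n : ℕ} (h : m ≤ n) :
    (Finset.univ.map (Fin.castLEEmb h))ᶜ = Finset.univ.filter fun i : Fin n => m ≤ (i : ℕ) := by
  ext i
  rw [Finset.mem_compl, ← Finset.mem_coe]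
  simp

/-- Optimality of the POD basis: with `K = SᵀPS` symmetric positive definite, eigenvalues
`λ₁ ≥ … ≥ λ_{N_s} > 0` and orthonormal eigenvectors `e₁,…,e_{N_s}`, the matrix
`Ψ = S E_R Λ_R^{-1/2}` minimizes the total `P`-weighted projection error of the snapshot
columns over all `P`-orthonormal `Φ ∈ ℝ^{N×R}`, and the minimum value is `Σ_{i>R} λᵢ`. -/
theorem pod_basis_optimality
    (N Ns R : ℕ) (hR : R ≤ Ns)
    (P : Matrix (Fin N) (Fin N) ℝ) (hP : P.PosDef)
    (S : Matrix (Fin N) (Fin Ns) ℝ) (hS : LinearIndependent ℝ (fun n : Fin Ns => Sᵀ n))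
    (K : Matrix (Fin Ns) (Fin Ns) ℝ) (hK : K = Sᵀ * P * S)
    (lam : Fin Ns → ℝ) (e : Fin Ns → Fin Ns → ℝ)
    (hdec : ∀ i j : Fin Ns, i ≤ j → lam j ≤ lam i)
    (hpos : ∀ i, 0 < lam i)
    (horth : ∀ i j : Fin Ns, e i ⬝ᵥ e j = if i = j then (1 : ℝ) else 0)
    (heig : ∀ i, K *ᵥ e i = lam i • e i)
    (ER : Matrix (Fin Ns) (Fin R) ℝ) (hER : ER = Matrix.of fun n r => e (Fin.castLE hR r) n)
    (Ψ : Matrix (Fin N) (Fin R) ℝ)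
    (hΨ : Ψ = S * ER * Matrix.diagonal fun r => (Real.sqrt (lam (Fin.castLE hR r)))⁻¹)
    (err : Matrix (Fin N) (Fin R) ℝ → ℝ)
    (herr : err = fun Φ => ∑ n : Fin Ns,
      (Sᵀ n - Φ *ᵥ (Φᵀ *ᵥ (P *ᵥ Sᵀ n))) ⬝ᵥ (P *ᵥ (Sᵀ n - Φ *ᵥ (Φᵀ *ᵥ (P *ᵥ Sᵀ n))))) :
    (∀ Φ : Matrix (Fin N) (Fin R) ℝ, Φᵀ * P * Φ = 1 → err Ψ ≤ err Φ) ∧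
    err Ψ = ∑ i ∈ Finset.univ.filter (fun i : Fin Ns => R ≤ (i : ℕ)), lam i := by
  subst hK hER herr
  have hdom : ∀ r, ∀ i ∉ Set.range (Fin.castLEEmb hR), lam i ≤ lam (Fin.castLEEmb hR r) :=
    fun r i hi => hdec _ _ (Fin.le_def.2 (r.2.le.trans (by simpa using hi)))
  simpa [weightedPodError, compl_map_castLEEmb] using
    (pod_basis_optimality_general hP.posSemidef S lam e (by simpa using horth)
      (by simpa using heig) (Fin.castLEEmb hR) (fun r => hpos _) hdom (by simpa using hΨ)).2
end

section
/- Let M ∈ ℝ^{N×N} be symmetric positive definite, let Ψ ∈ ℝ^{N×R} satisfy Ψᵀ M Ψ = I_R, let 𝔸' := M⁻¹ − Ψ Ψᵀ, let A ∈ ℝ^{N×N}, let τ ∈ ℝ, and let f ∈ ℝ^N satisfy 𝔸' f = 0. Then for all d, ŷ ∈ ℝ^R, the APG closed coarse-scale equations coincide with a Petrov–Galerkin projection of the full-order residual: Ψᵀ M Ψ d + Ψᵀ A ( Ψ ŷ − τ 𝔸' A Ψ ŷ ) − Ψᵀ f = [ ( I_N − τ (𝔸')ᵀ Aᵀ ) Ψ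 ]ᵀ ( M Ψ d + A Ψ ŷ − f ). -/
/-!
Transposing the test basis turns its perturbation `−τ (𝔸')ᵀ Aᵀ Ψ` into `−τ Ψᵀ A 𝔸'`, so the
Petrov–Galerkin equation is the Galerkin one with `A 𝔸'` applied to the whole residual
`M Ψ d + A Ψ ŷ − f`. Since `𝔸' M Ψ = Ψ − Ψ (Ψᵀ M Ψ) = 0` and `𝔸' f = 0`, only `A Ψ ŷ` survives under
`𝔸'`, which leaves exactly the closure term.
-/

open Matrix

section

variable {n m K : Type*} [Fintype n] [DecidableEq n] [CommRing K]

/-- The fine-scale operator `𝔸'` entering the Mori–Zwanzig closure. The trial basis `Ψ` and the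
Galerkin test basis `Φ` may differ; the APG method takes `Φ = Ψ`. -/
noncomputable def fineScaleOperator [Fintype m] (M : Matrix n n K) (Ψ Φ : Matrix n m K) :
    Matrix n n K :=
  M⁻¹ - Ψ * Φᵀ

/-- The Petrov–Galerkin test basis of the APG method: the Galerkin test basis `Φ` perturbed by the
transpose of `-τ • (A * B)`, where `B` is the fine-scale operator and `τ` the stabilization
parameter. -/
def apgTestBasis (A B : Matrix n n K) (τ : K) (Φ : Matrix n m K) : Matrix n m K :=
  (1 - τ • (Bᵀ * Aᵀ)) * Φ

theorem fineScaleOperator_mul_mul_eq_zero [Fintype m] [DecidableEq m] {M : Matrix n n K}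
    {Ψ Φ : Matrix n m K} (hM : IsUnit M) (hΨ : Φᵀ * M * Ψ = 1) :
    fineScaleOperator M Ψ Φ * (M * Ψ) = 0 :=
  calc
    (M⁻¹ - Ψ * Φᵀ) * (M * Ψ) = M⁻¹ * (M * Ψ) - Ψ * (Φᵀ * M * Ψ) := by
      simp only [Matrix.sub_mul, Matrix.mul_assoc]
    _ = Ψ - Ψ := by
      rw [nonsing_inv_mul_cancel_left _ _ ((isUnit_iff_isUnit_det M).mp hM), hΨ, Matrix.mul_one]
    _ = 0 := sub_self Ψ

theorem fineScaleOperator_mulVec_residual [Fintype m] [DecidableEq m] {M : Matrix n n K}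
    {Ψ Φ : Matrix n m K} {f : n → K} (hM : IsUnit M) (hΨ : Φᵀ * M * Ψ = 1)
    (hf : fineScaleOperator M Ψ Φ *ᵥ f = 0) (d : m → K) (g : n → K) :
    fineScaleOperator M Ψ Φ *ᵥ (M *ᵥ (Ψ *ᵥ d) + g - f) = fineScaleOperator M Ψ Φ *ᵥ g := by
  have hd : fineScaleOperator M Ψ Φ *ᵥ (M *ᵥ (Ψ *ᵥ d)) = 0 := by
    rw [mulVec_mulVec d M Ψ, mulVec_mulVec, fineScaleOperator_mul_mul_eq_zero hM hΨ, zero_mulVec]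
  rw [mulVec_sub, mulVec_add, hd, hf, zero_add, sub_zero]

theorem transpose_apgTestBasis (A B : Matrix n n K) (τ : K) (Φ : Matrix n m K) :
    (apgTestBasis A B τ Φ)ᵀ = Φᵀ * (1 - τ • (A * B)) := by
  simp only [apgTestBasis, transpose_mul, transpose_sub, transpose_one, transpose_smul,
    transpose_transpose]

theorem transpose_apgTestBasis_mulVec (A B : Matrix n n K) (τ : K) (Φ : Matrix n m K)
    (r : n → K) :
    (apgTestBasis A B τ Φ)ᵀ *ᵥ r = Φᵀ *ᵥ (r - τ • (A *ᵥ (B *ᵥ r))) := by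
  rw [transpose_apgTestBasis, ← mulVec_mulVec, sub_mulVec, one_mulVec, smul_mulVec,
    ← mulVec_mulVec]

theorem apg_petrov_galerkin_form_general [Fintype m] [DecidableEq m] {M : Matrix n n K}
    {Ψ Φ : Matrix n m K} (hM : IsUnit M) (hΨ : Φᵀ * M * Ψ = 1) (A : Matrix n n K) (τ : K)
    {f : n → K} (hf : fineScaleOperator M Ψ Φ *ᵥ f = 0) (d yhat : m → K) :
    Φᵀ *ᵥ (M *ᵥ (Ψ *ᵥ d)) +
        Φᵀ *ᵥ (A *ᵥ (Ψ *ᵥ yhat - τ • (fineScaleOperator M Ψ Φ *ᵥ (A *ᵥ (Ψ *ᵥ yhat))))) - Φᵀ *ᵥ f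
      = (apgTestBasis A (fineScaleOperator M Ψ Φ) τ Φ)ᵀ *ᵥ
          (M *ᵥ (Ψ *ᵥ d) + A *ᵥ (Ψ *ᵥ yhat) - f) := by
  rw [transpose_apgTestBasis_mulVec, fineScaleOperator_mulVec_residual hM hΨ hf]
  simp only [mulVec_sub, mulVec_add, mulVec_smul]
  abel

end

/-- The APG closed coarse-scale equations coincide with a Petrov–Galerkin projection of the
full-order residual: assuming `ΨᵀMΨ = I`, `𝔸' = M⁻¹ − ΨΨᵀ`, and `𝔸' f = 0`,
`ΨᵀMΨd + ΨᵀA(Ψŷ − τ𝔸'AΨŷ) − Ψᵀf = [(I − τ(𝔸')ᵀAᵀ)Ψ]ᵀ (MΨd + AΨŷ − f)`. -/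
theorem apg_petrov_galerkin_form
    (N R : ℕ) (M : Matrix (Fin N) (Fin N) ℝ) (hM : M.PosDef)
    (Ψ : Matrix (Fin N) (Fin R) ℝ) (hΨ : Ψᵀ * M * Ψ = 1)
    (A' : Matrix (Fin N) (Fin N) ℝ) (hA' : A' = M⁻¹ - Ψ * Ψᵀ)
    (A : Matrix (Fin N) (Fin N) ℝ) (τ : ℝ)
    (f : Fin N → ℝ) (hf : A' *ᵥ f = 0) :
    ∀ d yhat : Fin R → ℝ,
      Ψᵀ *ᵥ (M *ᵥ (Ψ *ᵥ d)) +
          Ψᵀ *ᵥ (A *ᵥ (Ψ *ᵥ yhat - τ • (A' *ᵥ (A *ᵥ (Ψ *ᵥ yhat))))) - Ψᵀ *ᵥ f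
        = ((1 - τ • (A'ᵀ * Aᵀ)) * Ψ)ᵀ *ᵥ (M *ᵥ (Ψ *ᵥ d) + A *ᵥ (Ψ *ᵥ yhat) - f) := by
  intro d yhat
  subst hA'
  exact apg_petrov_galerkin_form_general hM.isUnit hΨ A τ hf d yhat
end
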